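/- There exists a density measure μ and a set A ⊆ ℕ with μ(A) > d̄(A), where d̄ denotes upper asymptotic density. Concretely, let A = ⋃_{i=1}^{∞} {2^{2^i}, …, 2·2^{2^i} − 1}, let ℱ be any free ultrafilter on ℕ containing the set {2^{2^i} : i ∈ ℕ}, let 2ℱ be the ultrafilter with base {2F : F ∈ ℱ}, and let μ(X) = 2·((2ℱ)-lim X(n)/n) − (ℱ-lim X(n)/n); then μ(A) = 1 while d̄(A) = 1/2. This answers van Douwen's question (whether μ(A) ≤ d̄(A) holds for every density measure) in the negative. -/

import Mathlib

open Filter Topology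

/-- The counting function `A(n) = |A ∩ [1, n]|`, as a real number. -/
noncomputable def count (A : Set ℕ) (n : ℕ) : ℝ :=
  ((A ∩ Set.Icc 1 n).ncard : ℝ)

/-- `A ⊆ ℕ` has asymptotic density `a`, i.e. `A(n)/n → a`. -/
def HasDensity (A : Set ℕ) (a : ℝ) : Prop :=
  Filter.Tendsto (fun n : ℕ => count A n / n) Filter.atTop (nhds a)

/-- Membership of a permutation `π` of `ℕ` in the Lévy group `𝒢`:
`|{k : k ≤ n < π(k)}| / n → 0`. -/
def InLevyGroup (π : Equiv.Perm ℕ) : Prop :=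
  Filter.Tendsto
    (fun n : ℕ => (({k : ℕ | k ≤ n ∧ n < π k}.ncard : ℝ) / n))
    Filter.atTop (nhds 0)

/-- A finitely additive probability measure defined on all subsets of `ℕ`,
with values in `[0, 1]`. -/
def IsFAMeasure (μ : Set ℕ → ℝ) : Prop :=
  (∀ A : Set ℕ, 0 ≤ μ A) ∧ (∀ A : Set ℕ, μ A ≤ 1) ∧ μ Set.univ = 1 ∧
    ∀ A B : Set ℕ, Disjoint A B → μ (A ∪ B) = μ A + μ B

/-- A density measure: a finitely additive measure extending asymptotic density. -/
def IsDensityMeasure (μ : Set ℕ → ℝ) : Prop :=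
  IsFAMeasure μ ∧ ∀ (A : Set ℕ) (a : ℝ), HasDensity A a → μ A = a

/-- Statistical convergence of a real sequence `x` to `L`: for every `ε > 0`
the set `{n : |x n − L| ≥ ε}` has asymptotic density zero. -/
def StatTendsto (x : ℕ → ℝ) (L : ℝ) : Prop :=
  ∀ ε : ℝ, 0 < ε → HasDensity {n : ℕ | ε ≤ |x n - L|} 0

/-- The limit of a (bounded) real sequence along an ultrafilter on `ℕ`. -/
noncomputable def ulim (𝒰 : Ultrafilter ℕ) (x : ℕ → ℝ) : ℝ :=
  limUnder (𝒰 : Filter ℕ) x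

/-- The set `A = ⋃_{i=1}^∞ {2^(2^i), …, 2·2^(2^i) − 1}`. -/
def Aex : Set ℕ := {m : ℕ | ∃ i : ℕ, 1 ≤ i ∧ 2 ^ 2 ^ i ≤ m ∧ m < 2 * 2 ^ 2 ^ i}

/-- Blümlinger's density measure `μ(X) = 2·((2ℱ)-lim X(n)/n) − (ℱ-lim X(n)/n)`. -/
noncomputable def muEx (𝒰 𝒱 : Ultrafilter ℕ) (X : Set ℕ) : ℝ :=
  2 * ulim 𝒱 (fun n : ℕ => count X n / n) - ulim 𝒰 (fun n : ℕ => count X n / n)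

/-- The proportion of elements of `X` in the dyadic window `(n, 2n]`. -/
noncomputable def windowDensity (X : Set ℕ) (n : ℕ) : ℝ :=
  (count X (2 * n) - count X n) / n

theorem finite_inter_Icc (X : Set ℕ) (n : ℕ) : (X ∩ Set.Icc 1 n).Finite :=
  (Set.finite_Icc 1 n).inter_of_right X

theorem count_nonneg (X : Set ℕ) (n : ℕ) : 0 ≤ count X n := Nat.cast_nonneg _

theorem count_univ (n : ℕ) : count Set.univ n = n := by
  simp [count, Set.ncard_eq_toFinset_card']

theorem count_mono_right (X : Set ℕ) {m n : ℕ} (h : m ≤ n) : count X m ≤ count X n := by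
  unfold count
  exact_mod_cast Set.ncard_le_ncard
    (Set.inter_subset_inter_right X (Set.Icc_subset_Icc_right h)) (finite_inter_Icc X n)

theorem count_union {X Y : Set ℕ} (h : Disjoint X Y) (n : ℕ) :
    count (X ∪ Y) n = count X n + count Y n := by
  unfold count
  rw [Set.union_inter_distrib_right, Set.ncard_union_eq
    (h.mono Set.inter_subset_left Set.inter_subset_left)
    (finite_inter_Icc X n) (finite_inter_Icc Y n)]
  push_cast
  rfl

theorem count_add_count_compl (X : Set ℕ) (n : ℕ) : count X n + count Xᶜ n = n := by
  rw [← count_union disjoint_compl_right, Set.union_compl_self, count_univ]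

theorem count_le (X : Set ℕ) (n : ℕ) : count X n ≤ n := by
  linarith [count_add_count_compl X n, count_nonneg Xᶜ n]

theorem count_div_mem_Icc (X : Set ℕ) (n : ℕ) : count X n / n ∈ Set.Icc (0 : ℝ) 1 :=
  ⟨div_nonneg (count_nonneg X n) n.cast_nonneg, div_le_one_of_le₀ (count_le X n) n.cast_nonneg⟩

theorem windowDensity_nonneg (X : Set ℕ) (n : ℕ) : 0 ≤ windowDensity X n :=
  div_nonneg (sub_nonneg.2 (count_mono_right X (by omega))) n.cast_nonneg

theorem windowDensity_le_one (X : Set ℕ) (n : ℕ) : windowDensity X n ≤ 1 := by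
  refine div_le_one_of_le₀ ?_ n.cast_nonneg
  have h₁ := count_add_count_compl X n
  have h₂ := count_add_count_compl X (2 * n)
  have h₃ := count_mono_right Xᶜ (show n ≤ 2 * n by omega)
  push_cast at h₂
  linarith

theorem windowDensity_union {X Y : Set ℕ} (h : Disjoint X Y) (n : ℕ) :
    windowDensity (X ∪ Y) n = windowDensity X n + windowDensity Y n := by
  simp only [windowDensity, count_union h]
  ring

/-- A bounded sequence converges along an ultrafilter to its `ulim`. -/
theorem tendsto_ulim (𝒰 : Ultrafilter ℕ) {x : ℕ → ℝ} {a b : ℝ}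
    (hx : ∀ n, x n ∈ Set.Icc a b) : Tendsto x 𝒰 (𝓝 (ulim 𝒰 x)) := by
  obtain ⟨l, -, hl⟩ := (isCompact_Icc (a := a) (b := b)).ultrafilter_le_nhds' (𝒰.map x)
    (Filter.mem_map.2 (Filter.univ_mem' hx))
  exact tendsto_nhds_limUnder ⟨l, hl⟩

theorem ultrafilter_eq_map_double {𝒰 𝒱 : Ultrafilter ℕ}
    (h𝒱 : ∀ B : Set ℕ, B ∈ 𝒱 ↔ ∃ F ∈ 𝒰, (fun k : ℕ => 2 * k) '' F ⊆ B) :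
    𝒱 = 𝒰.map (fun k => 2 * k) := by
  ext B
  rw [h𝒱, Ultrafilter.mem_map]
  constructor
  · rintro ⟨F, hF, hB⟩
    exact Filter.mem_of_superset hF (Set.image_subset_iff.1 hB)
  · exact fun h => ⟨_, h, Set.image_preimage_subset _ _⟩

theorem tendsto_windowDensity (𝒰 : Ultrafilter ℕ) (X : Set ℕ) :
    Tendsto (windowDensity X) 𝒰 (𝓝 (muEx 𝒰 (𝒰.map fun k => 2 * k) X)) := by
  have h₁ := tendsto_ulim 𝒰 (count_div_mem_Icc X)
  have h₂ : Tendsto (fun n : ℕ => count X (2 * n) / (2 * n : ℕ)) 𝒰 _ :=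
    (tendsto_ulim (𝒰.map fun k => 2 * k) (count_div_mem_Icc X)).comp
      (tendsto_map (f := fun k : ℕ => 2 * k))
  refine ((h₂.const_mul 2).sub h₁).congr fun n => ?_
  rcases Nat.eq_zero_or_pos n with rfl | hn
  · simp [windowDensity]
  · have : (n : ℝ) ≠ 0 := by positivity
    simp only [windowDensity]
    push_cast
    field_simp

theorem isDensityMeasure_muEx {𝒰 : Ultrafilter ℕ} (h : (𝒰 : Filter ℕ) ≤ atTop) :
    IsDensityMeasure (muEx 𝒰 (𝒰.map fun k => 2 * k)) := by
  have key : ∀ (X : Set ℕ) (a : ℝ), HasDensity X a → muEx 𝒰 (𝒰.map fun k => 2 * k) X = a := by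
    intro X a hX
    have h₁ := (hX.mono_left h).limUnder_eq
    have hdouble : Tendsto (fun k : ℕ => 2 * k) 𝒰 atTop :=
      (tendsto_id.const_mul_atTop' two_pos).mono_left h
    have h₂ : limUnder (𝒰.map fun k => 2 * k : Filter ℕ) (fun n : ℕ => count X n / n) = a :=
      (hX.mono_left hdouble).limUnder_eq
    unfold muEx ulim
    rw [h₁, h₂]
    ring
  refine ⟨⟨fun X => ?_, fun X => ?_, ?_, fun X Y hXY => ?_⟩, key⟩
  · exact ge_of_tendsto' (tendsto_windowDensity 𝒰 X) (windowDensity_nonneg X)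
  · exact le_of_tendsto' (tendsto_windowDensity 𝒰 X) (windowDensity_le_one X)
  · refine key _ _ (tendsto_const_nhds.congr' ?_)
    filter_upwards [eventually_gt_atTop 0] with n hn
    rw [count_univ, div_self (by positivity)]
  · refine tendsto_nhds_unique (tendsto_windowDensity 𝒰 (X ∪ Y)) ?_
    simp only [funext (windowDensity_union hXY)]
    exact (tendsto_windowDensity 𝒰 X).add (tendsto_windowDensity 𝒰 Y)

theorem count_Aex_window {i : ℕ} (hi : 1 ≤ i) :
    count Aex (2 ^ 2 ^ i) + 2 ^ 2 ^ i ≤ count Aex (2 * 2 ^ 2 ^ i) + 1 := by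
  have hdisj : Disjoint (Aex ∩ Set.Icc 1 (2 ^ 2 ^ i))
      (Set.Ioo (2 ^ 2 ^ i) (2 * 2 ^ 2 ^ i)) := by
    rw [Set.disjoint_left]
    rintro m ⟨-, -, hm⟩ ⟨hm', -⟩
    omega
  have hsub : Aex ∩ Set.Icc 1 (2 ^ 2 ^ i) ∪ Set.Ioo (2 ^ 2 ^ i) (2 * 2 ^ 2 ^ i) ⊆
      Aex ∩ Set.Icc 1 (2 * 2 ^ 2 ^ i) := by
    rintro m (⟨hA, h₁, h₂⟩ | ⟨h₁, h₂⟩)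
    · exact ⟨hA, h₁, by omega⟩
    · exact ⟨⟨i, hi, h₁.le, h₂⟩, by omega, h₂.le⟩
  have hcard := Set.ncard_le_ncard hsub (finite_inter_Icc _ _)
  rw [Set.ncard_union_eq hdisj (finite_inter_Icc _ _) (Set.finite_Ioo _ _),
    Set.ncard_eq_toFinset_card' (Set.Ioo _ _), Set.toFinset_Ioo, Nat.card_Ioo] at hcard
  unfold count
  have hpos : 0 < 2 ^ 2 ^ i := by positivity
  have : (Aex ∩ Set.Icc 1 (2 ^ 2 ^ i)).ncard + 2 ^ 2 ^ i ≤
      (Aex ∩ Set.Icc 1 (2 * 2 ^ 2 ^ i)).ncard + 1 := by omega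
  exact_mod_cast this

theorem le_count_Aex {i : ℕ} (hi : 1 ≤ i) : 2 ^ 2 ^ i ≤ count Aex (2 * 2 ^ 2 ^ i) := by
  have hone : 1 ≤ count Aex (2 ^ 2 ^ i) := by
    have hpos : 1 ≤ 2 ^ 2 ^ i := Nat.one_le_two_pow
    have hmem : 2 ^ 2 ^ i ∈ Aex ∩ Set.Icc 1 (2 ^ 2 ^ i) :=
      ⟨⟨i, hi, le_rfl, by omega⟩, hpos, le_rfl⟩
    unfold count
    exact_mod_cast (Set.ncard_pos (finite_inter_Icc _ _)).2 ⟨_, hmem⟩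
  linarith [count_Aex_window hi]

theorem count_Aex_le (n : ℕ) : count Aex n ≤ n / 2 + 2 * √n + 1 := by
  rcases lt_or_ge n 4 with hn | hn
  · have hn' : (n : ℝ) ≤ 4 := by exact_mod_cast hn.le
    have hsqrt : (n : ℝ) / 4 ≤ √n := Real.le_sqrt_of_sq_le (by nlinarith [n.cast_nonneg (α := ℝ)])
    linarith [count_le Aex n, Real.sqrt_nonneg (n : ℝ)]
  · obtain ⟨j, hlow, hhigh⟩ : ∃ j, 2 ^ 2 ^ (j + 1) ≤ n ∧ n < 2 ^ 2 ^ (j + 2) := by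
      have hlog : 2 ≤ Nat.log 2 n := Nat.le_log_of_pow_le one_lt_two hn
      obtain ⟨j, hj⟩ : ∃ j, Nat.log 2 (Nat.log 2 n) = j + 1 :=
        Nat.exists_eq_succ_of_ne_zero (Nat.log_pos one_lt_two hlog).ne'
      refine ⟨j, ?_, ?_⟩
      · rw [← hj]
        exact Nat.pow_le_of_le_log (by omega) (Nat.pow_log_le_self 2 (by omega))
      · have h := Nat.lt_pow_succ_log_self one_lt_two (Nat.log 2 n)
        rw [hj] at h
        exact Nat.lt_pow_of_log_lt one_lt_two h
    have hsub : Aex ∩ Set.Icc 1 n ⊆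
        Set.Ico 0 (2 * 2 ^ 2 ^ j) ∪ Set.Icc (2 ^ 2 ^ (j + 1)) (min n (2 * 2 ^ 2 ^ (j + 1))) := by
      rintro m ⟨⟨k, -, hk₁, hk₂⟩, -, hmn⟩
      rcases lt_trichotomy k (j + 1) with hk | rfl | hk
      · have : 2 ^ 2 ^ k ≤ 2 ^ 2 ^ j :=
          Nat.pow_le_pow_right two_pos (Nat.pow_le_pow_right two_pos (by omega))
        exact Or.inl ⟨m.zero_le, by omega⟩
      · exact Or.inr ⟨hk₁, le_min hmn hk₂.le⟩
      · have : 2 ^ 2 ^ (j + 2) ≤ 2 ^ 2 ^ k :=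
          Nat.pow_le_pow_right two_pos (Nat.pow_le_pow_right two_pos (by omega))
        omega
    have hcard := (Set.ncard_le_ncard hsub
      ((Set.finite_Ico _ _).union (Set.finite_Icc _ _))).trans (Set.ncard_union_le _ _)
    rw [Set.ncard_eq_toFinset_card' (Set.Ico _ _), Set.toFinset_Ico, Nat.card_Ico,
      Set.ncard_eq_toFinset_card' (Set.Icc _ _), Set.toFinset_Icc, Nat.card_Icc] at hcard
    have hnat : 2 * (Aex ∩ Set.Icc 1 n).ncard ≤ n + 4 * 2 ^ 2 ^ j + 2 := by omega
    have hreal : 2 * count Aex n ≤ n + 4 * 2 ^ 2 ^ j + 2 := by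
      unfold count
      exact_mod_cast hnat
    have hsqrt : (2 : ℝ) ^ 2 ^ j ≤ √n := by
      refine Real.le_sqrt_of_sq_le ?_
      rw [← pow_mul, ← pow_succ]
      exact_mod_cast hlow
    linarith

theorem limsup_count_Aex : limsup (fun n : ℕ => count Aex n / n) atTop = 1 / 2 := by
  have hbdd : IsBoundedUnder (· ≤ ·) atTop (fun n : ℕ => count Aex n / n) :=
    isBoundedUnder_of ⟨1, fun n => (count_div_mem_Icc Aex n).2⟩
  have hcobdd : IsCoboundedUnder (· ≤ ·) atTop (fun n : ℕ => count Aex n / n) :=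
    (isBoundedUnder_of ⟨0, fun n => (count_div_mem_Icc Aex n).1⟩ :
      IsBoundedUnder (· ≥ ·) atTop (fun n : ℕ => count Aex n / n)).isCoboundedUnder_le
  apply le_antisymm
  · have hinv : Tendsto (fun n : ℕ => (√(n : ℝ))⁻¹) atTop (𝓝 0) :=
      tendsto_inv_atTop_zero.comp (Real.tendsto_sqrt_atTop.comp tendsto_natCast_atTop_atTop)
    have hlim : Tendsto (fun n : ℕ => 1 / 2 + 2 * (√(n : ℝ))⁻¹ + (√(n : ℝ))⁻¹ ^ 2) atTop
        (𝓝 (1 / 2)) := by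
      simpa using ((hinv.const_mul 2).const_add (1 / 2 : ℝ)).add (hinv.pow 2)
    rw [← hlim.limsup_eq]
    refine limsup_le_limsup ?_ hcobdd hlim.isBoundedUnder_le
    filter_upwards [eventually_gt_atTop 0] with n hn
    have hs : 0 < √(n : ℝ) := by positivity
    have hsq : √(n : ℝ) ^ 2 = n := Real.sq_sqrt n.cast_nonneg
    rw [div_le_iff₀ (by positivity)]
    refine (count_Aex_le n).trans_eq ?_
    rw [← hsq, Real.sqrt_sq hs.le]
    field_simp
  · refine le_limsup_of_frequently_le (frequently_atTop.2 fun N => ?_) hbdd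
    have hN : N < 2 ^ 2 ^ (N + 1) :=
      (Nat.lt_succ_self N).trans (Nat.lt_two_pow_self.trans Nat.lt_two_pow_self)
    refine ⟨2 * 2 ^ 2 ^ (N + 1), by omega, ?_⟩
    rw [le_div_iff₀ (by positivity)]
    push_cast
    linarith [le_count_Aex (show 1 ≤ N + 1 by omega)]

theorem muEx_Aex {𝒰 : Ultrafilter ℕ} (h : (𝒰 : Filter ℕ) ≤ atTop)
    (hmem : {n : ℕ | ∃ i : ℕ, 1 ≤ i ∧ n = 2 ^ 2 ^ i} ∈ 𝒰) :
    muEx 𝒰 (𝒰.map fun k => 2 * k) Aex = 1 := by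
  have hlow : Tendsto (fun n : ℕ => 1 - 1 / (n : ℝ)) 𝒰 (𝓝 1) := by
    simpa using (tendsto_one_div_atTop_nhds_zero_nat (𝕜 := ℝ)).const_sub 1 |>.mono_left h
  refine tendsto_nhds_unique (tendsto_windowDensity 𝒰 Aex)
    (tendsto_of_tendsto_of_tendsto_of_le_of_le' hlow tendsto_const_nhds ?_
      (Eventually.of_forall (windowDensity_le_one Aex)))
  filter_upwards [hmem] with n hn
  obtain ⟨i, hi, rfl⟩ := hn
  unfold windowDensity
  rw [le_div_iff₀ (by positivity), sub_mul, one_div_mul_cancel (by positivity)]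
  push_cast
  linarith [count_Aex_window hi]

/-- Counterexample to van Douwen's question: with `ℱ` a free ultrafilter
containing `{2^(2^i) : i ≥ 1}` and `2ℱ` the ultrafilter with base
`{2F : F ∈ ℱ}`, the density measure `μ(X) = 2·((2ℱ)-lim X(n)/n) − (ℱ-lim X(n)/n)`
satisfies `μ(A) = 1` while the upper asymptotic density of `A` is `1/2`;
in particular `μ(A) > d̄(A)`. -/
theorem vanDouwen_question_counterexample (𝒰 𝒱 : Ultrafilter ℕ)
    (hfree : (𝒰 : Filter ℕ) ≤ Filter.cofinite)
    (hmem : {n : ℕ | ∃ i : ℕ, 1 ≤ i ∧ n = 2 ^ 2 ^ i} ∈ 𝒰)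
    (h𝒱 : ∀ B : Set ℕ, B ∈ 𝒱 ↔ ∃ F ∈ 𝒰, (fun k : ℕ => 2 * k) '' F ⊆ B) :
    IsDensityMeasure (muEx 𝒰 𝒱) ∧
      muEx 𝒰 𝒱 Aex = 1 ∧
      Filter.limsup (fun n : ℕ => count Aex n / n) Filter.atTop = 1 / 2 ∧
      Filter.limsup (fun n : ℕ => count Aex n / n) Filter.atTop < muEx 𝒰 𝒱 Aex := by
  have h : (𝒰 : Filter ℕ) ≤ atTop := Nat.cofinite_eq_atTop ▸ hfree
  obtain rfl := ultrafilter_eq_map_double h𝒱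
  refine ⟨isDensityMeasure_muEx h, muEx_Aex h hmem, limsup_count_Aex, ?_⟩
  rw [limsup_count_Aex, muEx_Aex h hmem]
  norm_num
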